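/- Let d ≥ 1 be an integer and let P and Q be (α,C)-controlled probability measures on (0,1)^d for some C > 1 and 0 < α < 1. Then there exists a constant K > 0, depending only on d, C and α, such that for every h > 0 with 1/h a positive integer, |W₂²(G_h # P, G_h # Q) − W₂²(P, Q)| ≤ K·h^{1+α}. -/

import Mathlib

open MeasureTheory
open scoped ENNReal RealInnerProductSpace

noncomputable section

abbrev Euc (d : ℕ) := EuclideanSpace ℝ (Fin d)

/-- The open unit cube `(0,1)^d`. -/
def unitCube (d : ℕ) : Set (Euc d) := {x | ∀ i, x i ∈ Set.Ioo (0 : ℝ) 1}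

/-- `G_h` : map each point to the center of the axis-aligned grid cell
(of side length `h`) containing it. -/
def gridSnap (d : ℕ) (h : ℝ) (x : Euc d) : Euc d :=
  (EuclideanSpace.equiv (Fin d) ℝ).symm fun i => h * ⌊x i / h⌋ + h / 2

/-- Couplings of two Borel (probability) measures: probability measures on
the product with the prescribed marginals. -/
def Couplings {d : ℕ} (P Q : Measure (Euc d)) : Set (Measure (Euc d × Euc d)) :=
  {γ | IsProbabilityMeasure γ ∧ γ.map Prod.fst = P ∧ γ.map Prod.snd = Q}

/-- Squared 2-Wasserstein distance. -/
def W2sq {d : ℕ} (P Q : Measure (Euc d)) : ℝ :=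
  sInf {r | ∃ γ ∈ Couplings P Q, r = ∫ p, ‖p.1 - p.2‖ ^ 2 ∂γ}

/-- 2-Wasserstein distance. -/
def W2 {d : ℕ} (P Q : Measure (Euc d)) : ℝ := Real.sqrt (W2sq P Q)

/-- `P` and `Q` are `(α, C)`-controlled probability measures on `(0,1)^d`:
they possess densities `μ, ν` w.r.t. Lebesgue measure on `(0,1)^d` whose
`α`-Hölder seminorms sum to at most `C`, and which are bounded between
`C⁻¹` and `C`. -/
def IsControlled (d : ℕ) (α C : ℝ) (P Q : Measure (Euc d)) : Prop :=
  ∃ μ ν : Euc d → ℝ,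
    P = (volume.restrict (unitCube d)).withDensity (fun x => ENNReal.ofReal (μ x)) ∧
    Q = (volume.restrict (unitCube d)).withDensity (fun x => ENNReal.ofReal (ν x)) ∧
    (∃ Cμ Cν : ℝ, 0 ≤ Cμ ∧ 0 ≤ Cν ∧ Cμ + Cν ≤ C ∧
      (∀ x ∈ unitCube d, ∀ y ∈ unitCube d, |μ x - μ y| ≤ Cμ * ‖x - y‖ ^ α) ∧
      (∀ x ∈ unitCube d, ∀ y ∈ unitCube d, |ν x - ν y| ≤ Cν * ‖x - y‖ ^ α)) ∧
    (∀ x ∈ unitCube d, C⁻¹ ≤ μ x ∧ μ x ≤ C) ∧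
    (∀ x ∈ unitCube d, C⁻¹ ≤ ν x ∧ ν x ≤ C)

lemma norm_le_sqrt_mul {d : ℕ} {x : Euc d} {c : ℝ} (hc : 0 ≤ c) (hx : ∀ i, |x i| ≤ c) :
    ‖x‖ ≤ √d * c := by
  rw [EuclideanSpace.norm_eq]
  calc √(∑ i, ‖x i‖ ^ 2) ≤ √(∑ _i : Fin d, c ^ 2) := by
        refine Real.sqrt_le_sqrt (Finset.sum_le_sum fun i _ => ?_)
        exact pow_le_pow_left₀ (norm_nonneg _) (hx i) 2
    _ = √d * c := by
        rw [Finset.sum_const, Finset.card_univ, Fintype.card_fin, nsmul_eq_mul,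
          Real.sqrt_mul (Nat.cast_nonneg d), Real.sqrt_sq hc]

lemma measurableSet_unitCube (d : ℕ) : MeasurableSet (unitCube d) := by
  have : unitCube d = ⋂ i, (fun x : Euc d => x i) ⁻¹' Set.Ioo (0 : ℝ) 1 := by
    ext x; simp [unitCube]
  rw [this]
  exact MeasurableSet.iInter fun i => measurableSet_Ioo.preimage (by fun_prop)

lemma norm_sub_le_of_mem_unitCube {d : ℕ} {x y : Euc d} (hx : x ∈ unitCube d)
    (hy : y ∈ unitCube d) : ‖x - y‖ ≤ √d := by
  rw [← mul_one √(d : ℝ)]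
  refine norm_le_sqrt_mul zero_le_one fun i => ?_
  have h1 := hx i
  have h2 := hy i
  simp only [Set.mem_Ioo] at h1 h2
  rw [PiLp.sub_apply, abs_le]
  constructor <;> linarith

/-- `P` has a measurable density on `ℝ^d` which vanishes off the unit cube and which, on the unit
cube, takes values in `[C⁻¹, C]` and is `α`-Hölder with constant `C`. -/
structure IsHolderDensity (d : ℕ) (α C : ℝ) (P : Measure (Euc d)) (f : Euc d → ℝ) : Prop where
  measurable : Measurable f
  eq_withDensity : P = volume.withDensity fun x => ENNReal.ofReal (f x)
  eq_zero : ∀ x ∉ unitCube d, f x = 0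
  inv_le : ∀ x ∈ unitCube d, C⁻¹ ≤ f x
  le : ∀ x ∈ unitCube d, f x ≤ C
  holder : ∀ x ∈ unitCube d, ∀ y ∈ unitCube d, |f x - f y| ≤ C * ‖x - y‖ ^ α

lemma exists_isHolderDensity {d : ℕ} {α C : ℝ} (hα : 0 < α) {P : Measure (Euc d)}
    {μ : Euc d → ℝ} {c : ℝ} (hcC : c ≤ C)
    (hP : P = (volume.restrict (unitCube d)).withDensity (fun x => ENNReal.ofReal (μ x)))
    (hμ : ∀ x ∈ unitCube d, ∀ y ∈ unitCube d, |μ x - μ y| ≤ c * ‖x - y‖ ^ α)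
    (hb : ∀ x ∈ unitCube d, C⁻¹ ≤ μ x ∧ μ x ≤ C) :
    ∃ f, IsHolderDensity d α C P f := by
  have hcont : ContinuousOn μ (unitCube d) := by
    intro x hx
    have hlim : Filter.Tendsto (fun y => c * ‖y - x‖ ^ α) (nhdsWithin x (unitCube d))
        (nhds 0) := by
      have : Filter.Tendsto (fun y : Euc d => c * ‖y - x‖ ^ α) (nhds x)
          (nhds (c * ‖x - x‖ ^ α)) := by
        refine Continuous.tendsto ?_ x
        exact continuous_const.mul ((continuous_id.sub continuous_const).norm.rpow_const
          fun _ => Or.inr hα.le)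
      rw [sub_self, norm_zero, Real.zero_rpow hα.ne', mul_zero] at this
      exact this.mono_left nhdsWithin_le_nhds
    refine tendsto_iff_dist_tendsto_zero.2 (squeeze_zero' (Filter.Eventually.of_forall
      fun _ => dist_nonneg) ?_ hlim)
    filter_upwards [self_mem_nhdsWithin] with y hy
    rw [Real.dist_eq]
    exact hμ y hy x hx
  have hms := measurableSet_unitCube d
  refine ⟨(unitCube d).indicator μ, ?_, ?_, ?_, ?_, ?_, ?_⟩
  · classical
    rw [← Set.piecewise_eq_indicator]
    exact hcont.measurable_piecewise continuousOn_const hms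
  · rw [hP, ← withDensity_indicator hms]
    congr 1
    ext x
    by_cases hx : x ∈ unitCube d <;> simp [hx]
  · intro x hx; simp [hx]
  · intro x hx; simpa [hx] using (hb x hx).1
  · intro x hx; simpa [hx] using (hb x hx).2
  · intro x hx y hy
    simp only [Set.indicator_of_mem hx, Set.indicator_of_mem hy]
    exact (hμ x hx y hy).trans (mul_le_mul_of_nonneg_right hcC (by positivity))

namespace IsHolderDensity

variable {d : ℕ} {α C : ℝ} {P : Measure (Euc d)} {f : Euc d → ℝ}

lemma nonneg (hf : IsHolderDensity d α C P f) (hC : 0 < C) (x : Euc d) : 0 ≤ f x := by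
  by_cases hx : x ∈ unitCube d
  · exact (inv_pos.2 hC).le.trans (hf.inv_le x hx)
  · exact (hf.eq_zero x hx).ge

lemma ae_mem_unitCube (hf : IsHolderDensity d α C P f) : ∀ᵐ x ∂P, x ∈ unitCube d := by
  rw [hf.eq_withDensity, ae_withDensity_iff (by have := hf.measurable; fun_prop)]
  refine Filter.Eventually.of_forall fun x hx => ?_
  by_contra h
  exact hx (by rw [hf.eq_zero x h, ENNReal.ofReal_zero])

lemma measure_le (hf : IsHolderDensity d α C P f) {s : Set (Euc d)} (hs : MeasurableSet s) :
    P s ≤ ENNReal.ofReal C * volume (s ∩ unitCube d) := by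
  have h0 : P s = P (s ∩ unitCube d) := by
    refine measure_congr ?_
    filter_upwards [hf.ae_mem_unitCube] with x hx
    exact propext ⟨fun h => ⟨h, hx⟩, fun h => h.1⟩
  have hm := hs.inter (measurableSet_unitCube d)
  rw [h0, hf.eq_withDensity, withDensity_apply _ hm, ← setLIntegral_const]
  exact setLIntegral_mono measurable_const fun x hx => ENNReal.ofReal_le_ofReal (hf.le x hx.2)

lemma le_measure (hf : IsHolderDensity d α C P f) {s : Set (Euc d)} (hs : MeasurableSet s) :
    ENNReal.ofReal C⁻¹ * volume (s ∩ unitCube d) ≤ P s := by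
  have hm := hs.inter (measurableSet_unitCube d)
  refine le_trans ?_ (measure_mono Set.inter_subset_left (s := s ∩ unitCube d))
  rw [hf.eq_withDensity, withDensity_apply _ hm, ← setLIntegral_const]
  exact setLIntegral_mono (by have := hf.measurable; fun_prop)
    fun x hx => ENNReal.ofReal_le_ofReal (hf.inv_le x hx.2)

end IsHolderDensity

lemma volume_slab_le {d : ℕ} (i : Fin d) (a b : ℝ) :
    volume ({x : Euc d | x i ∈ Set.Icc a b} ∩ unitCube d) ≤ ENNReal.ofReal (b - a) := by
  have h := (PiLp.volume_preserving_ofLp (Fin d)).measure_preimage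
    (s := Set.univ.pi fun j => if j = i then Set.Icc a b else Set.Icc (0 : ℝ) 1)
    (MeasurableSet.univ_pi fun j => by split_ifs <;> exact measurableSet_Icc).nullMeasurableSet
  refine (measure_mono ?_).trans (h.trans_le ?_)
  · rintro x ⟨hx, hx'⟩ j -
    dsimp only
    split_ifs with hj
    · subst hj; exact hx
    · exact Set.Ioo_subset_Icc_self (hx' j)
  · rw [volume_pi_pi]
    refine (Finset.prod_eq_single i (fun j _ hj => ?_) (by simp)).trans_le ?_
    · simp [hj]
    · simp

/-- The involution of `ℝ` exchanging, for every integer `m`, the intervals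
`[(2m-1)g, 2mg)` and `[2mg, (2m+1)g)` by translation. -/
def lineSwap (g x : ℝ) : ℝ := if Even ⌊x / g⌋ then x - g else x + g

lemma measurableSet_even_floor (g : ℝ) : MeasurableSet {x : ℝ | Even ⌊x / g⌋} :=
  (measurable_id.div_const g).floor (MeasurableSet.of_discrete (s := {n : ℤ | Even n}))

lemma measurable_lineSwap (g : ℝ) : Measurable (lineSwap g) :=
  Measurable.ite (measurableSet_even_floor g) (by fun_prop) (by fun_prop)

lemma floor_sub_div_self {g : ℝ} (hg : 0 < g) (x : ℝ) : ⌊(x - g) / g⌋ = ⌊x / g⌋ - 1 := by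
  rw [sub_div, div_self hg.ne', Int.floor_sub_one]

lemma floor_add_div_self {g : ℝ} (hg : 0 < g) (x : ℝ) : ⌊(x + g) / g⌋ = ⌊x / g⌋ + 1 := by
  rw [add_div, div_self hg.ne', Int.floor_add_one]

lemma lineSwap_lineSwap {g : ℝ} (hg : 0 < g) (x : ℝ) : lineSwap g (lineSwap g x) = x := by
  by_cases h : Even ⌊x / g⌋
  · have h' : ¬ Even (⌊x / g⌋ - 1) := by
      rw [Int.even_sub]; simp [h]
    simp [lineSwap, h, floor_sub_div_self hg, h']
  · have h' : Even (⌊x / g⌋ + 1) := by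
      rw [Int.even_add]; simp [h]
    simp [lineSwap, h, floor_add_div_self hg, h']

lemma abs_lineSwap_sub {g : ℝ} (hg : 0 < g) (x : ℝ) : |lineSwap g x - x| = g := by
  unfold lineSwap
  split_ifs <;> simp [abs_of_pos hg]

lemma measurePreserving_lineSwap {g : ℝ} (hg : 0 < g) : MeasurePreserving (lineSwap g) := by
  refine ⟨measurable_lineSwap g, Measure.ext fun s hs => ?_⟩
  have hE := measurableSet_even_floor g
  rw [Measure.map_apply (measurable_lineSwap g) hs,
    ← measure_inter_add_sdiff (lineSwap g ⁻¹' s) hE, ← measure_inter_add_sdiff s hE, add_comm]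
  congr 1
  · rw [← measure_preimage_add_right volume g (s ∩ _)]
    congr 1
    ext x
    by_cases h : Even ⌊x / g⌋
    · simp [lineSwap, h, floor_add_div_self hg]
    · simp [lineSwap, h, floor_add_div_self hg, Int.not_even_iff_odd.1 h]
  · rw [← measure_preimage_add_right volume (-g) (s \ _)]
    congr 1
    ext x
    by_cases h : Even ⌊x / g⌋
    · simp [lineSwap, h, ← sub_eq_add_neg, floor_sub_div_self hg]
    · simp [lineSwap, h, ← sub_eq_add_neg, floor_sub_div_self hg]

/-- `lineSwap` applied to every coordinate. -/
def cubeSwap (d : ℕ) (g : ℝ) (x : Euc d) : Euc d := WithLp.toLp 2 fun i => lineSwap g (x i)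

section cubeSwap

variable {d : ℕ} {g : ℝ}

lemma cubeSwap_apply (x : Euc d) (i : Fin d) : cubeSwap d g x i = lineSwap g (x i) := rfl

lemma measurePreserving_cubeSwap (hg : 0 < g) : MeasurePreserving (cubeSwap d g) :=
  (PiLp.volume_preserving_toLp (Fin d)).comp
    ((volume_preserving_pi fun _ => measurePreserving_lineSwap hg).comp
      (PiLp.volume_preserving_ofLp (Fin d)))

lemma cubeSwap_cubeSwap (hg : 0 < g) (x : Euc d) : cubeSwap d g (cubeSwap d g x) = x := by
  ext i
  exact lineSwap_lineSwap hg (x i)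

lemma norm_cubeSwap_sub_le (hg : 0 < g) (x : Euc d) : ‖cubeSwap d g x - x‖ ≤ √d * g :=
  norm_le_sqrt_mul hg.le fun i => (abs_lineSwap_sub hg (x i)).le

lemma gridSnap_apply (h : ℝ) (x : Euc d) (i : Fin d) :
    gridSnap d h x i = h * ⌊x i / h⌋ + h / 2 := rfl

lemma floor_div_two_mul (x g : ℝ) : ⌊x / (2 * g)⌋ = ⌊x / g⌋ / 2 := by
  rw [mul_comm, ← div_div]
  exact_mod_cast Int.floor_div_natCast (x / g) 2

lemma gridSnap_sub_gridSnap_two_mul (x : Euc d) :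
    gridSnap d g x - gridSnap d (2 * g) x = (1 / 2 : ℝ) • (cubeSwap d g x - x) := by
  ext i
  simp only [PiLp.sub_apply, PiLp.smul_apply, gridSnap_apply, cubeSwap_apply, smul_eq_mul,
    floor_div_two_mul, lineSwap]
  rcases Int.even_or_odd' ⌊x i / g⌋ with ⟨m, hm | hm⟩
  · rw [hm, if_pos (even_two_mul m), Int.mul_ediv_cancel_left _ two_ne_zero]
    push_cast; ring
  · rw [hm, if_neg (Int.not_even_iff_odd.2 ⟨m, rfl⟩), show (2 * m + 1) / 2 = m by omega]
    push_cast; ring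

lemma abs_sub_gridSnap_le {h : ℝ} (hh : 0 < h) (x : Euc d) (i : Fin d) :
    |x i - gridSnap d h x i| ≤ h / 2 := by
  rw [gridSnap_apply]
  have h1 := Int.floor_le (x i / h)
  have h2 := Int.lt_floor_add_one (x i / h)
  rw [le_div_iff₀ hh] at h1
  rw [div_lt_iff₀ hh] at h2
  rw [abs_le]
  constructor <;> nlinarith

lemma norm_sub_gridSnap_le {h : ℝ} (hh : 0 < h) (x : Euc d) : ‖x - gridSnap d h x‖ ≤ √d * h :=
  norm_le_sqrt_mul hh.le fun i => (abs_sub_gridSnap_le hh x i).trans (by linarith)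

lemma measurable_gridSnap (h : ℝ) : Measurable (gridSnap d h) := by
  refine (WithLp.measurable_toLp 2 _).comp (measurable_pi_lambda _ fun i => ?_)
  have : Measurable fun x : Euc d => ⌊x i / h⌋ := by
    refine Measurable.floor ?_
    fun_prop
  fun_prop

end cubeSwap

section Wasserstein

variable {d : ℕ} {P Q : Measure (Euc d)}

lemma W2sq_le_of_mem {γ : Measure (Euc d × Euc d)} (hγ : γ ∈ Couplings P Q) :
    W2sq P Q ≤ ∫ p, ‖p.1 - p.2‖ ^ 2 ∂γ := by
  refine csInf_le ⟨0, ?_⟩ ⟨γ, hγ, rfl⟩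
  rintro r ⟨γ, -, rfl⟩
  exact integral_nonneg fun p => sq_nonneg _

lemma couplings_nonempty [IsProbabilityMeasure P] [IsProbabilityMeasure Q] :
    (Couplings P Q).Nonempty :=
  ⟨P.prod Q, inferInstance, by simp,
    by simp⟩

lemma exists_coupling_le_add [IsProbabilityMeasure P] [IsProbabilityMeasure Q] {ε : ℝ}
    (hε : 0 < ε) : ∃ γ ∈ Couplings P Q, ∫ p, ‖p.1 - p.2‖ ^ 2 ∂γ ≤ W2sq P Q + ε := by
  obtain ⟨γ₀, hγ₀⟩ := couplings_nonempty (P := P) (Q := Q)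
  obtain ⟨r, ⟨γ, hγ, rfl⟩, hr⟩ := exists_lt_of_csInf_lt
    (s := {r | ∃ γ ∈ Couplings P Q, r = ∫ p, ‖p.1 - p.2‖ ^ 2 ∂γ}) ⟨_, γ₀, hγ₀, rfl⟩
    (lt_add_of_pos_right (W2sq P Q) hε)
  exact ⟨γ, hγ, hr.le⟩

lemma le_W2sq [IsProbabilityMeasure P] [IsProbabilityMeasure Q] {c : ℝ}
    (hc : ∀ γ ∈ Couplings P Q, c ≤ ∫ p, ‖p.1 - p.2‖ ^ 2 ∂γ) : c ≤ W2sq P Q := by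
  obtain ⟨γ₀, hγ₀⟩ := couplings_nonempty (P := P) (Q := Q)
  refine le_csInf ⟨_, γ₀, hγ₀, rfl⟩ ?_
  rintro r ⟨γ, hγ, rfl⟩
  exact hc γ hγ

lemma map_swap_mem_couplings {γ : Measure (Euc d × Euc d)} (hγ : γ ∈ Couplings P Q) :
    γ.map Prod.swap ∈ Couplings Q P := by
  obtain ⟨h1, h2, h3⟩ := hγ
  refine ⟨Measure.isProbabilityMeasure_map measurable_swap.aemeasurable, ?_, ?_⟩
  · rw [Measure.map_map measurable_fst measurable_swap, ← h3]; rfl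
  · rw [Measure.map_map measurable_snd measurable_swap, ← h2]; rfl

lemma integral_map_swap (γ : Measure (Euc d × Euc d)) (F : Euc d × Euc d → ℝ) :
    ∫ p, F p ∂(γ.map Prod.swap) = ∫ p, F p.swap ∂γ :=
  integral_map_equiv MeasurableEquiv.prodComm F

lemma W2sq_comm [IsProbabilityMeasure P] [IsProbabilityMeasure Q] : W2sq P Q = W2sq Q P := by
  have key : ∀ (P Q : Measure (Euc d)) [IsProbabilityMeasure P] [IsProbabilityMeasure Q],
      W2sq P Q ≤ W2sq Q P := by
    intro P Q _ _
    refine le_W2sq fun γ hγ => (W2sq_le_of_mem (map_swap_mem_couplings hγ)).trans_eq ?_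
    rw [integral_map_swap]
    simp only [Prod.fst_swap, Prod.snd_swap, norm_sub_rev]
  exact le_antisymm (key P Q) (key Q P)

lemma ae_of_mem_couplings {γ : Measure (Euc d × Euc d)} (hγ : γ ∈ Couplings P Q)
    {p q : Euc d → Prop} (hp : ∀ᵐ x ∂P, p x) (hq : ∀ᵐ y ∂Q, q y) :
    ∀ᵐ z ∂γ, p z.1 ∧ q z.2 := by
  obtain ⟨-, rfl, rfl⟩ := hγ
  exact (ae_of_ae_map measurable_fst.aemeasurable hp).and
    (ae_of_ae_map measurable_snd.aemeasurable hq)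

lemma integral_fst_of_mem_couplings {γ : Measure (Euc d × Euc d)} (hγ : γ ∈ Couplings P Q)
    {F : Euc d → ℝ} (hF : Measurable F) : ∫ z, F z.1 ∂γ = ∫ x, F x ∂P := by
  obtain ⟨-, rfl, -⟩ := hγ
  rw [integral_map measurable_fst.aemeasurable hF.aestronglyMeasurable]

end Wasserstein

lemma map_withDensity_comp {X Y : Type*} [MeasurableSpace X] [MeasurableSpace Y]
    {μ : Measure X} {φ : X → Y} (hφ : Measurable φ) {w : Y → ℝ≥0∞} (hw : Measurable w) :
    (μ.withDensity (fun x => w (φ x))).map φ = (μ.map φ).withDensity w := by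
  ext s hs
  rw [Measure.map_apply hφ hs, withDensity_apply _ (hφ hs), withDensity_apply _ hs,
    setLIntegral_map hs hw hφ]

/-- The acceptance probability of the move `x ↦ S x` in the Metropolis chain that leaves the
measure with density `f` invariant. -/
def acceptance {d : ℕ} (f : Euc d → ℝ) (S : Euc d → Euc d) (x : Euc d) : ℝ :=
  min 1 (f (S x) / f x)

section Metropolis

variable {d : ℕ} {α C : ℝ} {P Q : Measure (Euc d)} {f : Euc d → ℝ} {S : Euc d → Euc d}

lemma measurable_acceptance (hf : Measurable f) (hS : Measurable S) :
    Measurable (acceptance f S) :=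
  measurable_const.min ((hf.comp hS).div hf)

lemma acceptance_le_one (x : Euc d) : acceptance f S x ≤ 1 := min_le_left _ _

lemma acceptance_nonneg (hf : ∀ x, 0 ≤ f x) (x : Euc d) : 0 ≤ acceptance f S x :=
  le_min zero_le_one (div_nonneg (hf _) (hf _))

lemma mul_acceptance (hf : ∀ x, 0 ≤ f x) (x : Euc d) :
    f x * acceptance f S x = min (f x) (f (S x)) := by
  rcases (hf x).eq_or_lt with h | h
  · rw [← h, zero_mul, min_eq_left (hf _)]
  · rw [acceptance, mul_min_of_nonneg _ _ h.le, mul_one, mul_div_cancel₀ _ (ne_of_gt h)]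

/-- The coupling obtained by letting the first marginal perform one Metropolis step. -/
def metropolisCoupling (f : Euc d → ℝ) (S : Euc d → Euc d) (γ : Measure (Euc d × Euc d)) :
    Measure (Euc d × Euc d) :=
  (γ.withDensity fun p => ENNReal.ofReal (acceptance f S p.1)).map (Prod.map S id) +
    γ.withDensity fun p => ENNReal.ofReal (1 - acceptance f S p.1)

lemma withDensity_acceptance_add {X : Type*} [MeasurableSpace X] (μ : Measure X) {a : X → ℝ}
    (ha : Measurable a) (h0 : ∀ x, 0 ≤ a x) (h1 : ∀ x, a x ≤ 1) :
    (μ.withDensity fun x => ENNReal.ofReal (a x)) +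
      (μ.withDensity fun x => ENNReal.ofReal (1 - a x)) = μ := by
  rw [← withDensity_add_left (by fun_prop)]
  conv_rhs => rw [← withDensity_one (μ := μ)]
  congr 1
  ext x
  rw [Pi.add_apply, ← ENNReal.ofReal_add (h0 x) (sub_nonneg.2 (h1 x))]
  simp

lemma metropolisCoupling_mem (hf : IsHolderDensity d α C P f) (hC : 0 < C)
    {γ : Measure (Euc d × Euc d)} (hγ : γ ∈ Couplings P Q)
    (hS : MeasurePreserving S) (hSS : ∀ x, S (S x) = x) :
    metropolisCoupling f S γ ∈ Couplings P Q := by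
  have hf0 := hf.nonneg hC
  have ha := measurable_acceptance hf.measurable hS.measurable
  have hSm := hS.measurable
  have hfm := hf.measurable
  have hadd := withDensity_acceptance_add γ (a := fun p => acceptance f S p.1)
    (by fun_prop) (fun p => acceptance_nonneg hf0 p.1) (fun p => acceptance_le_one p.1)
  have haddP := withDensity_acceptance_add P ha (acceptance_nonneg hf0) acceptance_le_one
  obtain ⟨hprob, h1, h2⟩ := hγ
  have hfst : (metropolisCoupling f S γ).map Prod.fst = P := by
    rw [metropolisCoupling, Measure.map_add _ _ measurable_fst,
      Measure.map_map measurable_fst (hSm.prodMap measurable_id)]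
    have hcomp : (Prod.fst ∘ Prod.map S id : Euc d × Euc d → Euc d) = S ∘ Prod.fst := rfl
    rw [hcomp, ← Measure.map_map hSm measurable_fst,
      map_withDensity_comp (w := fun x => ENNReal.ofReal (acceptance f S x)) measurable_fst
        (by fun_prop),
      map_withDensity_comp (w := fun x => ENNReal.ofReal (1 - acceptance f S x)) measurable_fst
        (by fun_prop), h1]
    have hinv : (P.withDensity fun x => ENNReal.ofReal (acceptance f S x)).map S =
        P.withDensity fun x => ENNReal.ofReal (acceptance f S x) := by
      have hd : (P.withDensity fun x => ENNReal.ofReal (acceptance f S x)) =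
          volume.withDensity fun x => ENNReal.ofReal (min (f x) (f (S x))) := by
        rw [hf.eq_withDensity, ← withDensity_mul _ (by fun_prop) (by fun_prop)]
        congr 1
        ext x
        rw [Pi.mul_apply, ← ENNReal.ofReal_mul (hf0 x), mul_acceptance hf0]
      have hmap := map_withDensity_comp (μ := volume) hSm
        (w := fun x => ENNReal.ofReal (min (f x) (f (S x)))) (by fun_prop)
      simp only [hSS, hS.map_eq] at hmap
      rw [hd]
      refine Eq.trans ?_ hmap
      simp only [min_comm]
    rw [hinv, haddP]
  have hsnd : (metropolisCoupling f S γ).map Prod.snd = Q := by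
    rw [metropolisCoupling, Measure.map_add _ _ measurable_snd,
      Measure.map_map measurable_snd (hSm.prodMap measurable_id)]
    have hcomp : (Prod.snd ∘ Prod.map S id : Euc d × Euc d → Euc d) = Prod.snd := rfl
    rw [hcomp, ← Measure.map_add _ _ measurable_snd, hadd, h2]
  refine ⟨⟨?_⟩, hfst, hsnd⟩
  rw [← Set.preimage_univ (f := Prod.fst), ← Measure.map_apply measurable_fst .univ, hfst, ← h1,
    Measure.map_apply measurable_fst .univ, Set.preimage_univ, measure_univ]

lemma integral_metropolisCoupling (hfm : Measurable f) (hf0 : ∀ x, 0 ≤ f x) (hS : Measurable S)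
    {γ : Measure (Euc d × Euc d)} [IsFiniteMeasure γ] {F : Euc d × Euc d → ℝ} (hF : Measurable F)
    (h1 : Integrable (fun p => F (S p.1, p.2)) γ) (h2 : Integrable F γ) :
    ∫ p, F p ∂(metropolisCoupling f S γ) =
      ∫ p, (acceptance f S p.1 * F (S p.1, p.2) + (1 - acceptance f S p.1) * F p) ∂γ := by
  have ha := measurable_acceptance hfm hS
  have hM : Measurable (Prod.map S id : Euc d × Euc d → Euc d × Euc d) := hS.prodMap measurable_id
  have hbd : ∀ p : Euc d × Euc d, ‖acceptance f S p.1‖ ≤ 1 := fun p => by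
    rw [Real.norm_of_nonneg (acceptance_nonneg hf0 _)]; exact acceptance_le_one _
  have hbd' : ∀ p : Euc d × Euc d, ‖1 - acceptance f S p.1‖ ≤ 1 := fun p => by
    rw [Real.norm_of_nonneg (sub_nonneg.2 (acceptance_le_one _))]
    linarith [acceptance_nonneg (S := S) hf0 p.1]
  have i1 : Integrable (fun p => acceptance f S p.1 * F (S p.1, p.2)) γ :=
    h1.bdd_mul (c := 1) (Measurable.aestronglyMeasurable (by fun_prop)) (ae_of_all _ hbd)
  have i2 : Integrable (fun p => (1 - acceptance f S p.1) * F p) γ :=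
    h2.bdd_mul (c := 1) (Measurable.aestronglyMeasurable (by fun_prop)) (ae_of_all _ hbd')
  have e1 : ∀ p : Euc d × Euc d, (ENNReal.ofReal (acceptance f S p.1)).toReal =
      acceptance f S p.1 := fun p => ENNReal.toReal_ofReal (acceptance_nonneg hf0 _)
  have e2 : ∀ p : Euc d × Euc d, (ENNReal.ofReal (1 - acceptance f S p.1)).toReal =
      1 - acceptance f S p.1 := fun p =>
    ENNReal.toReal_ofReal (sub_nonneg.2 (acceptance_le_one _))
  rw [integral_add i1 i2, metropolisCoupling, integral_add_measure]
  · rw [integral_map hM.aemeasurable hF.aestronglyMeasurable,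
      integral_withDensity_eq_integral_toReal_smul (by fun_prop) (by simp),
      integral_withDensity_eq_integral_toReal_smul (by fun_prop) (by simp)]
    simp only [e1, e2, smul_eq_mul, Prod.map, id]
  · rw [integrable_map_measure hF.aestronglyMeasurable hM.aemeasurable,
      integrable_withDensity_iff_integrable_smul' (by fun_prop) (by simp)]
    simpa only [e1, smul_eq_mul, Function.comp_def, Prod.map, id] using i1
  · rw [integrable_withDensity_iff_integrable_smul' (by fun_prop) (by simp)]
    simpa only [e2, smul_eq_mul] using i2

lemma integral_inner_metropolis_ge (hf : IsHolderDensity d α C P f) (hC : 0 < C)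
    (hQ : ∀ᵐ y ∂Q, y ∈ unitCube d) {γ : Measure (Euc d × Euc d)} (hγ : γ ∈ Couplings P Q)
    {ε : ℝ} (hε : ∫ p, ‖p.1 - p.2‖ ^ 2 ∂γ ≤ W2sq P Q + ε)
    (hS : MeasurePreserving S) (hSS : ∀ x, S (S x) = x) {r : ℝ} (hr : ∀ x, ‖S x - x‖ ≤ r) :
    -(ε / 2) - r ^ 2 / 2 - √d * r * ∫ x, (1 - acceptance f S x) ∂P ≤
      ∫ p, ⟪S p.1 - p.1, p.1 - p.2⟫ ∂γ := by
  have hf0 := hf.nonneg hC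
  have hSm := hS.measurable
  have ha := measurable_acceptance hf.measurable hSm
  have hr0 : 0 ≤ r := (norm_nonneg _).trans (hr 0)
  have hprob := hγ.1
  have hcube := ae_of_mem_couplings hγ hf.ae_mem_unitCube hQ
  have hD : ∀ᵐ p ∂γ, ‖p.1 - p.2‖ ≤ √d := by
    filter_upwards [hcube] with p hp using norm_sub_le_of_mem_unitCube hp.1 hp.2
  have i0 : Integrable (fun p : Euc d × Euc d => ‖p.1 - p.2‖ ^ 2) γ := by
    refine Integrable.of_bound (by fun_prop) (√d ^ 2) ?_
    filter_upwards [hD] with p hp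
    rw [norm_pow, norm_norm]
    gcongr
  have i1 : Integrable (fun p : Euc d × Euc d => ‖S p.1 - p.2‖ ^ 2) γ := by
    refine Integrable.of_bound (by fun_prop) ((r + √d) ^ 2) ?_
    filter_upwards [hD] with p hp
    rw [norm_pow, norm_norm]
    gcongr
    calc ‖S p.1 - p.2‖ = ‖(S p.1 - p.1) + (p.1 - p.2)‖ := by congr 1; abel
      _ ≤ r + √d := (norm_add_le _ _).trans (add_le_add (hr _) hp)
  have hinner : ∀ᵐ p ∂γ, |⟪S p.1 - p.1, p.1 - p.2⟫| ≤ r * √d := by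
    filter_upwards [hD] with p hp
    exact (abs_real_inner_le_norm _ _).trans (mul_le_mul (hr _) hp (norm_nonneg _) hr0)
  have i2 : Integrable (fun p : Euc d × Euc d => ⟪S p.1 - p.1, p.1 - p.2⟫) γ :=
    Integrable.of_bound (Measurable.aestronglyMeasurable (by fun_prop)) (r * √d) hinner
  have i3 : Integrable (fun p : Euc d × Euc d => 1 - acceptance f S p.1) γ := by
    refine Integrable.of_bound (Measurable.aestronglyMeasurable (by fun_prop)) 1
      (ae_of_all _ fun p => ?_)
    rw [Real.norm_of_nonneg (sub_nonneg.2 (acceptance_le_one _))]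
    linarith [acceptance_nonneg (S := S) hf0 p.1]
  have i4 : Integrable (fun p : Euc d × Euc d =>
      ‖p.1 - p.2‖ ^ 2 + 2 * ⟪S p.1 - p.1, p.1 - p.2⟫) γ := i0.add (i2.const_mul 2)
  have i5 : Integrable (fun p : Euc d × Euc d => ‖p.1 - p.2‖ ^ 2 +
      2 * ⟪S p.1 - p.1, p.1 - p.2⟫ + 2 * √d * r * (1 - acceptance f S p.1)) γ :=
    i4.add (i3.const_mul (2 * √d * r))
  have hcost := W2sq_le_of_mem (metropolisCoupling_mem hf hC hγ hS hSS)
  rw [integral_metropolisCoupling hf.measurable hf0 hSm (by fun_prop) i1 i0] at hcost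
  have hle : ∫ p, (acceptance f S p.1 * ‖S p.1 - p.2‖ ^ 2 +
        (1 - acceptance f S p.1) * ‖p.1 - p.2‖ ^ 2) ∂γ ≤
      ∫ p, (‖p.1 - p.2‖ ^ 2 + 2 * ⟪S p.1 - p.1, p.1 - p.2⟫ +
        2 * √d * r * (1 - acceptance f S p.1) + r ^ 2) ∂γ := by
    refine integral_mono_of_nonneg (ae_of_all _ fun p => ?_) ?_ ?_
    · have h0 := acceptance_nonneg (S := S) hf0 p.1
      have h1 := acceptance_le_one (f := f) (S := S) p.1
      have : 0 ≤ 1 - acceptance f S p.1 := by linarith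
      positivity
    · exact i5.add (integrable_const (r ^ 2))
    · filter_upwards [hinner] with p hp
      have h0 := acceptance_nonneg (S := S) hf0 p.1
      have h1 := acceptance_le_one (f := f) (S := S) p.1
      have hexp : ‖S p.1 - p.2‖ ^ 2 =
          ‖S p.1 - p.1‖ ^ 2 + 2 * ⟪S p.1 - p.1, p.1 - p.2⟫ + ‖p.1 - p.2‖ ^ 2 := by
        rw [← norm_add_sq_real]; congr 2; abel
      have h2 : ‖S p.1 - p.1‖ ^ 2 ≤ r ^ 2 := by
        have := hr p.1
        gcongr
      have h3 := (abs_le.1 hp).1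
      rw [hexp]
      nlinarith [mul_le_mul_of_nonneg_left h2 h0, mul_le_mul_of_nonneg_right h1 (sq_nonneg r),
        mul_le_mul_of_nonneg_left h3 (sub_nonneg.2 h1)]
  rw [integral_add i5 (integrable_const (r ^ 2)),
    integral_add i4 (i3.const_mul (2 * √d * r)),
    integral_add i0 (i2.const_mul 2), integral_const_mul, integral_const_mul,
    integral_fst_of_mem_couplings hγ (F := fun x => 1 - acceptance f S x) (by fun_prop)] at hle
  simp only [integral_const, probReal_univ, one_smul] at hle
  linarith

end Metropolis

lemma sq_le_rpow_one_add {g α : ℝ} (hg : 0 < g) (hg1 : g ≤ 1) (hα1 : α < 1) :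
    g ^ 2 ≤ g ^ (1 + α) := by
  rw [← Real.rpow_two]
  exact Real.rpow_le_rpow_of_exponent_ge hg hg1 (by linarith)

section UpperBound

variable {d : ℕ} {α C : ℝ} {P Q : Measure (Euc d)} {f : Euc d → ℝ}

lemma integral_one_sub_acceptance_le [IsProbabilityMeasure P] (hα : 0 < α) (hC : 0 < C)
    (hf : IsHolderDensity d α C P f) {g : ℝ} (hg : 0 < g) :
    ∫ x, (1 - acceptance f (cubeSwap d g) x) ∂P ≤
      C ^ 2 * (√d * g) ^ α + d * (2 * C * g) := by
  have hf0 := hf.nonneg hC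
  have ha := measurable_acceptance hf.measurable (measurePreserving_cubeSwap (d := d) hg).measurable
  set B : Set (Euc d) := ⋃ i, ({x | x i ∈ Set.Icc 0 g} ∪ {x | x i ∈ Set.Icc (1 - g) 1}) with hB
  have hslab : ∀ (i : Fin d) (a b : ℝ), MeasurableSet {x : Euc d | x i ∈ Set.Icc a b} :=
    fun i a b => measurableSet_Icc.preimage (by fun_prop : Measurable fun x : Euc d => x i)
  have hBm : MeasurableSet B :=
    MeasurableSet.iUnion fun i => (hslab i _ _).union (hslab i _ _)
  have hPslab : ∀ (i : Fin d) (a b : ℝ), P {x : Euc d | x i ∈ Set.Icc a b} ≤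
      ENNReal.ofReal (C * (b - a)) := fun i a b => by
    rw [ENNReal.ofReal_mul hC.le]
    exact (hf.measure_le (hslab i a b)).trans (mul_le_mul_right (volume_slab_le i a b) _)
  have hPB : P.real B ≤ d * (2 * C * g) := by
    refine ENNReal.toReal_le_of_le_ofReal (by positivity) ?_
    calc P B ≤ ∑ i : Fin d, P ({x | x i ∈ Set.Icc 0 g} ∪ {x | x i ∈ Set.Icc (1 - g) 1}) :=
          measure_iUnion_fintype_le _ _
      _ ≤ ∑ _i : Fin d, ENNReal.ofReal (2 * C * g) := by
          refine Finset.sum_le_sum fun i _ => (measure_union_le _ _).trans ?_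
          refine (add_le_add (hPslab i _ _) (hPslab i _ _)).trans_eq ?_
          rw [← ENNReal.ofReal_add (by simp; positivity) (by simp; positivity)]
          congr 1; ring
      _ = ENNReal.ofReal (d * (2 * C * g)) := by
          rw [Finset.sum_const, Finset.card_univ, Fintype.card_fin, nsmul_eq_mul,
            ENNReal.ofReal_mul (Nat.cast_nonneg d), ENNReal.ofReal_natCast]
  have hpt : ∀ᵐ x ∂P, 1 - acceptance f (cubeSwap d g) x ≤
      C ^ 2 * (√d * g) ^ α + B.indicator 1 x := by
    filter_upwards [hf.ae_mem_unitCube] with x hx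
    have hnn : 0 ≤ C ^ 2 * (√d * g) ^ α := by positivity
    by_cases hxB : x ∈ B
    · rw [Set.indicator_of_mem hxB, Pi.one_apply]
      linarith [acceptance_nonneg (S := cubeSwap d g) hf0 x]
    · rw [Set.indicator_of_notMem hxB, add_zero]
      have hSx : cubeSwap d g x ∈ unitCube d := by
        intro i
        have h0 := hx i
        simp only [hB, Set.mem_iUnion, Set.mem_union, Set.mem_ofPred_eq, Set.mem_Icc, not_exists,
          not_or, not_and, not_le] at hxB
        have h1 := (hxB i).1 h0.1.le
        have h2 : x i < 1 - g := by
          by_contra h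
          exact absurd ((hxB i).2 (not_lt.1 h)) (not_lt.2 h0.2.le)
        have h3 := abs_le.1 (abs_lineSwap_sub hg (x i)).le
        rw [cubeSwap_apply]
        constructor <;> linarith
      have hfx : 0 < f x := (inv_pos.2 hC).trans_le (hf.inv_le x hx)
      have hhol : f x - f (cubeSwap d g x) ≤ C * (√d * g) ^ α := by
        refine (le_abs_self _).trans ((hf.holder x hx _ hSx).trans ?_)
        rw [norm_sub_rev]
        gcongr
        exact norm_cubeSwap_sub_le hg x
      have hinv : 1 ≤ C * f x := by
        have := mul_le_mul_of_nonneg_left (hf.inv_le x hx) hC.le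
        rwa [mul_inv_cancel₀ hC.ne'] at this
      rw [acceptance]
      rcases min_cases 1 (f (cubeSwap d g x) / f x) with ⟨h, -⟩ | ⟨h, -⟩
      · rw [h, sub_self]; exact hnn
      · rw [h, one_sub_div hfx.ne', div_le_iff₀ hfx]
        refine hhol.trans ?_
        have : 0 ≤ C * (√d * g) ^ α := by positivity
        nlinarith
  have hind : Integrable (B.indicator (1 : Euc d → ℝ)) P :=
    (integrable_const (1 : ℝ)).indicator hBm
  have hint : Integrable (fun x => C ^ 2 * (√d * g) ^ α + B.indicator (1 : Euc d → ℝ) x) P :=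
    (integrable_const _).add hind
  refine (integral_mono_of_nonneg (ae_of_all _ fun x => sub_nonneg.2 (acceptance_le_one x)) hint
    hpt).trans ?_
  rw [integral_add (integrable_const _) hind, integral_indicator_one hBm]
  simpa using hPB

/-- The constant in the estimate for passing from grid size `2g` to grid size `g`. -/
def refineConst (d : ℕ) (α C : ℝ) : ℝ := d + d * (C ^ 2 * √d ^ α + d * (2 * C))

lemma refineConst_nonneg (hC : 0 < C) : 0 ≤ refineConst d α C := by
  unfold refineConst; positivity

lemma abs_inner_sub_gridSnap_le {h : ℝ} (hh : 0 < h) {x y : Euc d} (hx : x ∈ unitCube d)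
    (hy : y ∈ unitCube d) : |⟪x - gridSnap d h x, x - y⟫| ≤ d * h := by
  refine (abs_real_inner_le_norm _ _).trans ((mul_le_mul (norm_sub_gridSnap_le hh x)
    (norm_sub_le_of_mem_unitCube hx hy) (norm_nonneg _) (by positivity)).trans_eq ?_)
  rw [mul_right_comm, Real.mul_self_sqrt (Nat.cast_nonneg d)]

lemma integrable_inner_sub_gridSnap (hP : ∀ᵐ x ∂P, x ∈ unitCube d)
    (hQ : ∀ᵐ y ∂Q, y ∈ unitCube d) {γ : Measure (Euc d × Euc d)} (hγ : γ ∈ Couplings P Q)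
    {h : ℝ} (hh : 0 < h) :
    Integrable (fun p : Euc d × Euc d => ⟪p.1 - gridSnap d h p.1, p.1 - p.2⟫) γ := by
  have := hγ.1
  have hG := measurable_gridSnap (d := d) h
  refine Integrable.of_bound (Measurable.aestronglyMeasurable (by fun_prop)) (d * h) ?_
  filter_upwards [ae_of_mem_couplings hγ hP hQ] with p hp
  exact abs_inner_sub_gridSnap_le hh hp.1 hp.2

lemma integral_inner_gridSnap_refine [IsProbabilityMeasure P] (hα : 0 < α) (hα1 : α < 1)
    (hC : 0 < C) (hf : IsHolderDensity d α C P f) (hQ : ∀ᵐ y ∂Q, y ∈ unitCube d)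
    {γ : Measure (Euc d × Euc d)} (hγ : γ ∈ Couplings P Q)
    {ε : ℝ} (hε : ∫ p, ‖p.1 - p.2‖ ^ 2 ∂γ ≤ W2sq P Q + ε) {h : ℝ} (hh : 0 < h) (hh1 : h ≤ 1) :
    ∫ p, ⟪p.1 - gridSnap d (h / 2) p.1, p.1 - p.2⟫ ∂γ - ε / 4 - refineConst d α C * h ^ (1 + α) ≤
      ∫ p, ⟪p.1 - gridSnap d h p.1, p.1 - p.2⟫ ∂γ := by
  obtain ⟨g, rfl⟩ : ∃ g, h = 2 * g := ⟨h / 2, by ring⟩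
  have hg : 0 < g := by linarith
  have hg1 : g ≤ 1 := by linarith
  rw [mul_div_cancel_left₀ _ two_ne_zero]
  have i1 := integrable_inner_sub_gridSnap hf.ae_mem_unitCube hQ hγ hg
  have i2 := integrable_inner_sub_gridSnap hf.ae_mem_unitCube hQ hγ hh
  have hdiff : ∫ p, ⟪p.1 - gridSnap d (2 * g) p.1, p.1 - p.2⟫ ∂γ -
      ∫ p, ⟪p.1 - gridSnap d g p.1, p.1 - p.2⟫ ∂γ =
      1 / 2 * ∫ p, ⟪cubeSwap d g p.1 - p.1, p.1 - p.2⟫ ∂γ := by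
    rw [← integral_sub i2 i1, ← integral_const_mul]
    congr 1
    ext p
    rw [← inner_sub_left, sub_sub_sub_cancel_left, gridSnap_sub_gridSnap_two_mul,
      real_inner_smul_left]
  have hmet := integral_inner_metropolis_ge hf hC hQ hγ hε (measurePreserving_cubeSwap hg)
    (cubeSwap_cubeSwap hg) (norm_cubeSwap_sub_le hg)
  have hacc := integral_one_sub_acceptance_le hα hC hf hg
  have hd : √(d : ℝ) * √d = d := Real.mul_self_sqrt (Nat.cast_nonneg d)
  have hacc' := mul_le_mul_of_nonneg_left hacc (show 0 ≤ √(d : ℝ) * (√d * g) by positivity)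
  have hpow : g ^ (1 + α) = g * g ^ α := by rw [Real.rpow_add hg, Real.rpow_one]
  have hsq := sq_le_rpow_one_add hg hg1 hα1
  have hmono : g ^ (1 + α) ≤ (2 * g) ^ (1 + α) :=
    Real.rpow_le_rpow hg.le (by linarith) (by linarith)
  have hrej : √(d : ℝ) * (√d * g) * (C ^ 2 * (√d * g) ^ α + d * (2 * C * g)) ≤
      d * (C ^ 2 * √d ^ α + d * (2 * C)) * g ^ (1 + α) := by
    calc √(d : ℝ) * (√d * g) * (C ^ 2 * (√d * g) ^ α + d * (2 * C * g))
        = (√(d : ℝ) * √d) * (C ^ 2 * √d ^ α * (g * g ^ α) + d * (2 * C) * g ^ 2) := by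
          rw [Real.mul_rpow (Real.sqrt_nonneg _) hg.le]; ring
      _ ≤ d * (C ^ 2 * √d ^ α * g ^ (1 + α) + d * (2 * C) * g ^ (1 + α)) := by
          rw [hd, ← hpow]; gcongr
      _ = _ := by ring
  have hr2 : (√(d : ℝ) * g) ^ 2 ≤ d * g ^ (1 + α) := by
    rw [mul_pow, sq √(d : ℝ), hd]; gcongr
  have hK : refineConst d α C * g ^ (1 + α) ≤ refineConst d α C * (2 * g) ^ (1 + α) :=
    mul_le_mul_of_nonneg_left hmono (refineConst_nonneg hC)
  have hKd : refineConst d α C * g ^ (1 + α) =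
      d * g ^ (1 + α) + d * (C ^ 2 * √d ^ α + d * (2 * C)) * g ^ (1 + α) := by
    unfold refineConst; ring
  have hK0 : 0 ≤ refineConst d α C * (2 * g) ^ (1 + α) :=
    mul_nonneg (refineConst_nonneg hC) (by positivity)
  have hdg : 0 ≤ (d : ℝ) * g ^ (1 + α) := by positivity
  linarith

lemma integral_inner_gridSnap_iterate [IsProbabilityMeasure P] (hα : 0 < α) (hα1 : α < 1)
    (hC : 0 < C) (hf : IsHolderDensity d α C P f) (hQ : ∀ᵐ y ∂Q, y ∈ unitCube d)
    {γ : Measure (Euc d × Euc d)} (hγ : γ ∈ Couplings P Q)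
    {ε : ℝ} (hε : ∫ p, ‖p.1 - p.2‖ ^ 2 ∂γ ≤ W2sq P Q + ε) (J : ℕ) {h : ℝ} (hh : 0 < h)
    (hh1 : h ≤ 1) :
    ∫ p, ⟪p.1 - gridSnap d (h / 2 ^ J) p.1, p.1 - p.2⟫ ∂γ - J * (ε / 4) -
        2 * refineConst d α C * h ^ (1 + α) ≤
      ∫ p, ⟪p.1 - gridSnap d h p.1, p.1 - p.2⟫ ∂γ := by
  have hK := refineConst_nonneg (d := d) (α := α) hC
  induction J generalizing h with
  | zero =>
    simp only [pow_zero, div_one, Nat.cast_zero, zero_mul, sub_zero]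
    have : 0 ≤ 2 * refineConst d α C * h ^ (1 + α) := by positivity
    linarith
  | succ J ih =>
    have h1 := integral_inner_gridSnap_refine hα hα1 hC hf hQ hγ hε hh hh1
    have h2 := ih (half_pos hh) (by linarith)
    rw [div_div, ← pow_succ'] at h2
    have h3 : (h / 2) ^ (1 + α) ≤ h ^ (1 + α) / 2 := by
      rw [Real.div_rpow hh.le zero_le_two]
      refine div_le_div_of_nonneg_left (by positivity) two_pos ?_
      calc (2 : ℝ) = 2 ^ (1 : ℝ) := (Real.rpow_one 2).symm
        _ ≤ 2 ^ (1 + α) := Real.rpow_le_rpow_of_exponent_le one_le_two (by linarith)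
    have h4 := mul_le_mul_of_nonneg_left h3 (show 0 ≤ 2 * refineConst d α C by positivity)
    push_cast
    linarith

lemma integral_inner_gridSnap_ge [IsProbabilityMeasure P] (hα : 0 < α) (hα1 : α < 1)
    (hC : 0 < C) (hf : IsHolderDensity d α C P f) (hQ : ∀ᵐ y ∂Q, y ∈ unitCube d)
    {γ : Measure (Euc d × Euc d)} (hγ : γ ∈ Couplings P Q) {L : ℕ} (hL : 0 < L)
    (hε : ∫ p, ‖p.1 - p.2‖ ^ 2 ∂γ ≤ W2sq P Q + (1 / L : ℝ) ^ 3) :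
    -((d + 1 + 2 * refineConst d α C) * (1 / L : ℝ) ^ (1 + α)) ≤
      ∫ p, ⟪p.1 - gridSnap d (1 / L : ℝ) p.1, p.1 - p.2⟫ ∂γ := by
  have hprob := hγ.1
  have hL0 : (0 : ℝ) < L := Nat.cast_pos.2 hL
  have hL1 : (1 : ℝ) ≤ L := Nat.one_le_cast.2 hL
  have hh : (0 : ℝ) < 1 / L := by positivity
  have hh1 : (1 / L : ℝ) ≤ 1 := (div_le_one hL0).2 hL1
  have hiter := integral_inner_gridSnap_iterate hα hα1 hC hf hQ hγ hε L hh hh1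
  have hsq := sq_le_rpow_one_add hh hh1 hα1
  have hfine : (1 / L : ℝ) / 2 ^ L ≤ (1 / L : ℝ) ^ 2 := by
    rw [sq, ← mul_one_div (1 / L : ℝ)]
    refine mul_le_mul_of_nonneg_left (one_div_le_one_div_of_le hL0 ?_) hh.le
    exact_mod_cast Nat.lt_two_pow_self.le
  have hlast : |∫ p, ⟪p.1 - gridSnap d ((1 / L : ℝ) / 2 ^ L) p.1, p.1 - p.2⟫ ∂γ| ≤
      d * ((1 / L : ℝ) / 2 ^ L) := by
    have := norm_integral_le_of_norm_le_const (μ := γ)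
      (f := fun p => ⟪p.1 - gridSnap d ((1 / L : ℝ) / 2 ^ L) p.1, p.1 - p.2⟫)
      (C := d * ((1 / L : ℝ) / 2 ^ L)) (by
        filter_upwards [ae_of_mem_couplings hγ hf.ae_mem_unitCube hQ] with p hp
        exact abs_inner_sub_gridSnap_le (by positivity) hp.1 hp.2)
    simpa using this
  have h1 := (abs_le.1 hlast).1
  have h2 : (d : ℝ) * ((1 / L : ℝ) / 2 ^ L) ≤ d * (1 / L : ℝ) ^ (1 + α) :=
    mul_le_mul_of_nonneg_left (hfine.trans hsq) (Nat.cast_nonneg d)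
  have h3 : (L : ℝ) * ((1 / L : ℝ) ^ 3 / 4) = (1 / L : ℝ) ^ 2 / 4 := by
    field_simp
  have h4 := sq_nonneg (1 / L : ℝ)
  rw [h3] at hiter
  linarith

lemma map_gridSnap_mem_couplings {γ : Measure (Euc d × Euc d)} (hγ : γ ∈ Couplings P Q) (h : ℝ) :
    γ.map (Prod.map (gridSnap d h) (gridSnap d h)) ∈
      Couplings (P.map (gridSnap d h)) (Q.map (gridSnap d h)) := by
  have hG := measurable_gridSnap (d := d) h
  obtain ⟨h1, rfl, rfl⟩ := hγ
  refine ⟨Measure.isProbabilityMeasure_map (hG.prodMap hG).aemeasurable, ?_, ?_⟩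
  · rw [Measure.map_map measurable_fst (hG.prodMap hG), Measure.map_map hG measurable_fst]; rfl
  · rw [Measure.map_map measurable_snd (hG.prodMap hG), Measure.map_map hG measurable_snd]; rfl

lemma W2sq_map_gridSnap_le [IsProbabilityMeasure P] [IsProbabilityMeasure Q] (hα : 0 < α)
    (hα1 : α < 1) (hC : 0 < C) (hf : IsHolderDensity d α C P f) {g : Euc d → ℝ}
    (hg : IsHolderDensity d α C Q g) {L : ℕ} (hL : 0 < L) :
    W2sq (P.map (gridSnap d (1 / L))) (Q.map (gridSnap d (1 / L))) ≤
      W2sq P Q + (8 * d + 5 + 8 * refineConst d α C) * (1 / L : ℝ) ^ (1 + α) := by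
  have hL0 : (0 : ℝ) < L := Nat.cast_pos.2 hL
  have hL1 : (1 : ℝ) ≤ L := Nat.one_le_cast.2 hL
  have hh : (0 : ℝ) < 1 / L := by positivity
  have hh1 : (1 / L : ℝ) ≤ 1 := (div_le_one hL0).2 hL1
  obtain ⟨γ, hγ, hε⟩ := exists_coupling_le_add (P := P) (Q := Q) (pow_pos hh 3)
  have hP := hf.ae_mem_unitCube
  have hQ := hg.ae_mem_unitCube
  have hγ' := map_swap_mem_couplings hγ
  have hε' : ∫ p, ‖p.1 - p.2‖ ^ 2 ∂(γ.map Prod.swap) ≤ W2sq Q P + (1 / L : ℝ) ^ 3 := by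
    rw [integral_map_swap, ← W2sq_comm]
    simpa only [Prod.fst_swap, Prod.snd_swap, norm_sub_rev] using hε
  have hΦP := integral_inner_gridSnap_ge hα hα1 hC hf hQ hγ hL hε
  have hΦQ := integral_inner_gridSnap_ge hα hα1 hC hg hP hγ' hL hε'
  have iP := integrable_inner_sub_gridSnap hP hQ hγ hh
  have iQ := integrable_inner_sub_gridSnap hQ hP hγ' hh
  rw [integral_map_swap] at hΦQ
  replace iQ := (integrable_map_equiv MeasurableEquiv.prodComm _).1 iQ
  have hprob := hγ.1
  have hG := measurable_gridSnap (d := d) (1 / L)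
  set h : ℝ := 1 / L with hhdef
  have iQ' : Integrable (fun p : Euc d × Euc d => ⟪p.2 - gridSnap d h p.2, p.2 - p.1⟫) γ := iQ
  have i0 : Integrable (fun p : Euc d × Euc d => ‖p.1 - p.2‖ ^ 2) γ := by
    refine Integrable.of_bound (by fun_prop) (√d ^ 2) ?_
    filter_upwards [ae_of_mem_couplings hγ hP hQ] with p hp
    rw [norm_pow, norm_norm]
    gcongr
    exact norm_sub_le_of_mem_unitCube hp.1 hp.2
  have i1 : Integrable (fun p : Euc d × Euc d => ‖p.1 - p.2‖ ^ 2 -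
      2 * ⟪p.1 - gridSnap d h p.1, p.1 - p.2⟫) γ := i0.sub (iP.const_mul 2)
  have i2 : Integrable (fun p : Euc d × Euc d => ‖p.1 - p.2‖ ^ 2 -
      2 * ⟪p.1 - gridSnap d h p.1, p.1 - p.2⟫ -
      2 * ⟪p.2 - gridSnap d h p.2, p.2 - p.1⟫) γ := i1.sub (iQ'.const_mul 2)
  have hle : ∫ p, ‖gridSnap d h p.1 - gridSnap d h p.2‖ ^ 2 ∂γ ≤
      ∫ p, (‖p.1 - p.2‖ ^ 2 - 2 * ⟪p.1 - gridSnap d h p.1, p.1 - p.2⟫ -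
        2 * ⟪p.2 - gridSnap d h p.2, p.2 - p.1⟫ + 4 * d * h ^ 2) ∂γ := by
    refine integral_mono_of_nonneg (ae_of_all _ fun p => sq_nonneg _)
      (i2.add (integrable_const _)) (ae_of_all _ fun p => ?_)
    set u := p.1 - gridSnap d h p.1 with hu
    set v := p.2 - gridSnap d h p.2 with hv
    have hexp : gridSnap d h p.1 - gridSnap d h p.2 = (p.1 - p.2) - (u - v) := by
      rw [hu, hv]; abel
    have huv : ‖u - v‖ ^ 2 ≤ 4 * d * h ^ 2 := by
      have h1 : ‖u - v‖ ≤ 2 * (√d * h) := by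
        refine (norm_sub_le _ _).trans ?_
        linarith [norm_sub_gridSnap_le hh p.1, norm_sub_gridSnap_le hh p.2]
      calc ‖u - v‖ ^ 2 ≤ (2 * (√d * h)) ^ 2 := by gcongr
        _ = 4 * √d ^ 2 * h ^ 2 := by ring
        _ = 4 * d * h ^ 2 := by rw [Real.sq_sqrt (Nat.cast_nonneg d)]
    have hinner : ⟪p.1 - p.2, u - v⟫ = ⟪u, p.1 - p.2⟫ + ⟪v, p.2 - p.1⟫ := by
      rw [inner_sub_right, real_inner_comm u, ← neg_sub p.1 p.2, inner_neg_right,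
        real_inner_comm v]
      ring
    change ‖gridSnap d h p.1 - gridSnap d h p.2‖ ^ 2 ≤ _
    rw [hexp, norm_sub_sq_real, hinner]
    linarith
  rw [integral_add i2 (integrable_const _), integral_sub i1 (iQ'.const_mul 2),
    integral_sub i0 (iP.const_mul 2), integral_const_mul, integral_const_mul, integral_const,
    probReal_univ, one_smul] at hle
  have hcost := W2sq_le_of_mem (map_gridSnap_mem_couplings hγ h)
  rw [integral_map (hG.prodMap hG).aemeasurable
    (Measurable.aestronglyMeasurable (by fun_prop))] at hcost
  simp only [Prod.map, Prod.fst_swap, Prod.snd_swap] at hcost hΦQ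
  have hsq := sq_le_rpow_one_add hh hh1 hα1
  have hcube : h ^ 3 ≤ h ^ 2 := pow_le_pow_of_le_one hh.le hh1 (by norm_num)
  have hd : 4 * (d : ℝ) * h ^ 2 ≤ 4 * d * h ^ (1 + α) := by gcongr
  have hd0 : 0 ≤ (d : ℝ) * h ^ (1 + α) := by positivity
  linarith

end UpperBound

section LowerBound

open ProbabilityTheory

variable {d : ℕ} {α C : ℝ} {P Q : Measure (Euc d)} {f g : Euc d → ℝ}

lemma countable_range_gridSnap (h : ℝ) : (Set.range (gridSnap d h)).Countable := by
  let F : (Fin d → ℤ) → Euc d :=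
    fun k => (EuclideanSpace.equiv (Fin d) ℝ).symm fun i => h * k i + h / 2
  refine (Set.countable_range F).mono ?_
  rintro _ ⟨x, rfl⟩
  exact ⟨fun i => ⌊x i / h⌋, rfl⟩

/-- A map with countable range charges almost every point of its range. -/
lemma ae_map_singleton_ne_zero {X Y : Type*} [MeasurableSpace X] [MeasurableSpace Y]
    [MeasurableSingletonClass Y] {μ : Measure X} {φ : X → Y} (hφ : Measurable φ)
    (hc : (Set.range φ).Countable) : ∀ᵐ y ∂(μ.map φ), μ.map φ {y} ≠ 0 := by
  have h1 : ∀ᵐ y ∂(μ.map φ), y ∈ Set.range φ :=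
    (ae_map_iff hφ.aemeasurable hc.measurableSet).2 (ae_of_all _ fun x => ⟨x, rfl⟩)
  have h2 : μ.map φ {y ∈ Set.range φ | μ.map φ {y} = 0} = 0 := by
    have hc' := hc.mono (Set.sep_subset (Set.range φ) fun y => μ.map φ {y} = 0)
    rw [measure_null_iff_singleton hc']
    exact fun y hy => hy.2
  filter_upwards [h1, measure_eq_zero_iff_ae_notMem.1 h2] with y hy hy' h0
  exact hy' ⟨hy, h0⟩

lemma condDistrib_id_eq_cond [IsProbabilityMeasure P] {φ : Euc d → Euc d} (hφ : Measurable φ)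
    {a : Euc d} (ha : P.map φ {a} ≠ 0) : condDistrib id φ P a = cond P (φ ⁻¹' {a}) := by
  ext s hs
  have hm : MeasurableSet (φ ⁻¹' {a}) := hφ (measurableSet_singleton a)
  rw [condDistrib_apply_of_ne_zero measurable_id a ha, cond_apply hm,
    Measure.map_apply hφ (measurableSet_singleton a),
    Measure.map_apply (hφ.prodMk measurable_id) ((measurableSet_singleton a).prod hs)]
  rfl

/-- Odd functions around `a` integrate to zero over cubes centered at `a`. -/
lemma setIntegral_inner_sub_eq_zero (a w : Euc d) (r : ℝ) :
    ∫ x in {x : Euc d | ∀ i, |x i - a i| < r}, ⟪w, x - a⟫ = 0 := by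
  set O := {x : Euc d | ∀ i, |x i - a i| < r} with hO
  have hOm : MeasurableSet O := by
    have : O = ⋂ i, {x : Euc d | |x i - a i| < r} := by ext x; simp [hO]
    rw [this]
    exact MeasurableSet.iInter fun i => measurableSet_lt (by fun_prop) measurable_const
  rw [← integral_indicator hOm]
  have h := integral_sub_left_eq_self (O.indicator fun x => ⟪w, x - a⟫)
    (volume : Measure (Euc d)) (a + a)
  have hodd : ∀ x, O.indicator (fun x => ⟪w, x - a⟫) (a + a - x) =
      -O.indicator (fun x => ⟪w, x - a⟫) x := by
    intro x
    have hmem : a + a - x ∈ O ↔ x ∈ O := by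
      refine forall_congr' fun i => ?_
      have : (a + a - x) i - a i = -(x i - a i) := by
        simp only [PiLp.sub_apply, PiLp.add_apply]; ring
      rw [this, abs_neg]
    by_cases hx : x ∈ O
    · rw [Set.indicator_of_mem hx, Set.indicator_of_mem (hmem.2 hx), ← inner_neg_right]
      congr 1; abel
    · rw [Set.indicator_of_notMem hx, Set.indicator_of_notMem (mt hmem.1 hx), neg_zero]
  simp only [hodd, integral_neg] at h
  linarith

/-- The barycenter of `P` conditioned on a grid cell is close to the center of the cell. -/
lemma abs_integral_inner_cond_le [IsProbabilityMeasure P] (hα : 0 < α) (hC : 0 < C)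
    (hf : IsHolderDensity d α C P f) {L : ℕ} (hL : 0 < L) {a : Euc d}
    (ha : P (gridSnap d (1 / L) ⁻¹' {a}) ≠ 0) (w : Euc d) :
    |∫ x, ⟪w, x - a⟫ ∂(cond P (gridSnap d (1 / L) ⁻¹' {a}))| ≤
      ‖w‖ * (C ^ 2 * (√d * (1 / L)) * (√d * (1 / L)) ^ α) := by
  have hL0 : (0 : ℝ) < L := Nat.cast_pos.2 hL
  have hh : (0 : ℝ) < 1 / L := by positivity
  have hLh : (L : ℝ) * (1 / L) = 1 := by field_simp
  set h : ℝ := 1 / L with hhdef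
  set D := gridSnap d h ⁻¹' {a} with hD
  obtain ⟨x₀, hx₀, hx₀c⟩ : ∃ x ∈ D, x ∈ unitCube d := by
    by_contra! hcon
    refine ha (measure_eq_zero_iff_ae_notMem.2 ?_)
    filter_upwards [hf.ae_mem_unitCube] with x hx hxD using hcon x hxD hx
  have hai : ∀ i, a i = h * ⌊x₀ i / h⌋ + h / 2 := fun i => by
    rw [← (hx₀ : gridSnap d h x₀ = a), gridSnap_apply]
  have hk0 : ∀ i, (0 : ℝ) ≤ ⌊x₀ i / h⌋ := fun i => by
    exact_mod_cast Int.floor_nonneg.2 (div_nonneg (hx₀c i).1.le hh.le)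
  have hk1 : ∀ i, (⌊x₀ i / h⌋ : ℝ) + 1 ≤ L := fun i => by
    have : ⌊x₀ i / h⌋ < (L : ℤ) := by
      rw [Int.floor_lt, div_lt_iff₀ hh]
      push_cast
      rw [hLh]
      exact (hx₀c i).2
    exact_mod_cast this
  set O := {x : Euc d | ∀ i, |x i - a i| < h / 2} with hO
  have hOm : MeasurableSet O := by
    have : O = ⋂ i, {x : Euc d | |x i - a i| < h / 2} := by ext x; simp [hO]
    rw [this]
    exact MeasurableSet.iInter fun i => measurableSet_lt (by fun_prop) measurable_const
  have hOD : O ⊆ D := by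
    intro x hx
    change gridSnap d h x = a
    ext i
    rw [gridSnap_apply, hai]
    congr 3
    have := abs_lt.1 (hx i)
    rw [hai] at this
    rw [Int.floor_eq_iff, le_div_iff₀ hh, div_lt_iff₀ hh]
    constructor <;> linarith
  have hOc : O ⊆ unitCube d := by
    intro x hx i
    have := abs_lt.1 (hx i)
    rw [hai] at this
    have h0 := mul_nonneg hh.le (hk0 i)
    have h1 := mul_le_mul_of_nonneg_left (hk1 i) hh.le
    constructor <;> linarith
  have haO : a ∈ O := fun i => by rw [sub_self, abs_zero]; positivity
  have hPN : P (⋃ i, {x : Euc d | x i ∈ Set.Icc (a i - h / 2) (a i - h / 2)}) = 0 := by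
    rw [measure_iUnion_null_iff]
    intro i
    have hm : MeasurableSet {x : Euc d | x i ∈ Set.Icc (a i - h / 2) (a i - h / 2)} :=
      measurableSet_Icc.preimage (by fun_prop)
    refine le_antisymm ((hf.measure_le hm).trans ?_) zero_le
    refine (mul_le_mul_right (volume_slab_le i _ _) _).trans ?_
    simp
  have hDO : D =ᵐ[P] O := by
    filter_upwards [measure_eq_zero_iff_ae_notMem.1 hPN] with x hx
    refine propext ⟨fun hxD i => ?_, fun hxO => hOD hxO⟩
    have h1 := abs_sub_gridSnap_le hh x i
    rw [(hxD : gridSnap d h x = a)] at h1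
    refine lt_of_le_of_ne h1 fun he => ?_
    have hfl := Int.lt_floor_add_one (x i / h)
    have hax : a i = h * ⌊x i / h⌋ + h / 2 := by
      rw [← (hxD : gridSnap d h x = a), gridSnap_apply]
    rw [div_lt_iff₀ hh] at hfl
    rcases abs_choice (x i - a i) with h2 | h2
    · rw [h2] at he; linarith
    · refine hx (Set.mem_iUnion.2 ⟨i, ?_⟩)
      rw [h2] at he
      constructor <;> linarith
  have hvol : volume O ≠ ∞ := by
    intro htop
    have := hf.le_measure hOm
    rw [Set.inter_eq_left.2 hOc, htop, ENNReal.mul_top (by simpa using hC)] at this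
    exact measure_ne_top P O (top_le_iff.1 this)
  have hPO : C⁻¹ * volume.real O ≤ P.real D := by
    have := hf.le_measure hOm
    rw [Set.inter_eq_left.2 hOc] at this
    have h2 := ENNReal.toReal_mono (measure_ne_top P O) this
    rw [ENNReal.toReal_mul, ENNReal.toReal_ofReal (inv_pos.2 hC).le] at h2
    exact h2.trans_eq (congrArg _ (measure_congr hDO).symm)
  have hPD : 0 < P.real D := ENNReal.toReal_pos ha (measure_ne_top _ _)
  set r := √d * h with hr
  have hr0 : 0 ≤ r := by positivity
  have hdist : ∀ x ∈ O, ‖x - a‖ ≤ r := by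
    intro x hx
    have := norm_sub_gridSnap_le hh x
    rwa [(hOD hx : gridSnap d h x = a)] at this
  have hbd : ∀ x ∈ O, ‖⟪w, x - a⟫‖ ≤ ‖w‖ * r := fun x hx =>
    (norm_inner_le_norm _ _).trans (mul_le_mul_of_nonneg_left (hdist x hx) (norm_nonneg _))
  have hio : IntegrableOn (fun x => ⟪w, x - a⟫) O := by
    refine Measure.integrableOn_of_bounded hvol
      (Measurable.aestronglyMeasurable (by fun_prop)) (M := ‖w‖ * r) ?_
    exact (ae_restrict_iff' hOm).2 (ae_of_all _ hbd)
  have hfm := hf.measurable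
  have hif : IntegrableOn (fun x => f x * ⟪w, x - a⟫) O := by
    refine Measure.integrableOn_of_bounded hvol
      (Measurable.aestronglyMeasurable (by fun_prop)) (M := C * (‖w‖ * r)) ?_
    refine (ae_restrict_iff' hOm).2 (ae_of_all _ fun x hx => ?_)
    rw [norm_mul, Real.norm_of_nonneg (hf.nonneg hC x)]
    exact mul_le_mul (hf.le x (hOc hx)) (hbd x hx) (norm_nonneg _) hC.le
  have hint : ∫ x in O, ⟪w, x - a⟫ ∂P = ∫ x in O, (f x - f a) * ⟪w, x - a⟫ := by
    have h1 : ∫ x in O, ⟪w, x - a⟫ ∂P = ∫ x in O, f x * ⟪w, x - a⟫ := by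
      conv_lhs => rw [hf.eq_withDensity]
      rw [setIntegral_withDensity_eq_setIntegral_toReal_smul (by fun_prop)
        (ae_of_all _ fun x => ENNReal.ofReal_lt_top) _ hOm]
      refine integral_congr_ae (ae_of_all _ fun x => ?_)
      simp [ENNReal.toReal_ofReal (hf.nonneg hC x)]
    simp only [sub_mul]
    rw [integral_sub hif (hio.const_mul _), integral_const_mul,
      setIntegral_inner_sub_eq_zero, h1, mul_zero, sub_zero]
  have hnum : |∫ x in O, ⟪w, x - a⟫ ∂P| ≤ C * r ^ α * (‖w‖ * r) * volume.real O := by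
    rw [hint, ← Real.norm_eq_abs]
    refine norm_setIntegral_le_of_norm_le_const hvol.lt_top fun x hx => ?_
    rw [norm_mul]
    refine mul_le_mul ?_ (hbd x hx) (norm_nonneg _) (by positivity)
    refine (hf.holder x (hOc hx) a (hOc haO)).trans ?_
    gcongr
    exact hdist x hx
  rw [ProbabilityTheory.cond, integral_smul_measure, setIntegral_congr_set hDO,
    ENNReal.toReal_inv, smul_eq_mul, ← measureReal_def, abs_mul, abs_of_pos (inv_pos.2 hPD), inv_mul_le_iff₀ hPD]
  refine hnum.trans ?_
  have hv : volume.real O ≤ C * P.real D := by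
    rwa [inv_mul_le_iff₀ hC] at hPO
  calc C * r ^ α * (‖w‖ * r) * volume.real O ≤ C * r ^ α * (‖w‖ * r) * (C * P.real D) := by
        gcongr
    _ = P.real D * (‖w‖ * (C ^ 2 * r * r ^ α)) := by ring

lemma integral_prod_norm_sub_sq_le {p q : Measure (Euc d)} [IsProbabilityMeasure p]
    [IsProbabilityMeasure q] {a b : Euc d} {r m : ℝ} (hp : ∀ᵐ x ∂p, ‖x - a‖ ≤ r)
    (hq : ∀ᵐ y ∂q, ‖y - b‖ ≤ r) (hpm : ∀ w, |∫ x, ⟪w, x - a⟫ ∂p| ≤ ‖w‖ * m)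
    (hqm : ∀ w, |∫ y, ⟪w, y - b⟫ ∂q| ≤ ‖w‖ * m) :
    ∫ z, ‖z.1 - z.2‖ ^ 2 ∂(p.prod q) ≤ ‖a - b‖ ^ 2 + 4 * ‖a - b‖ * m + 4 * r ^ 2 := by
  have hae : ∀ᵐ z ∂(p.prod q), ‖z.1 - a‖ ≤ r ∧ ‖z.2 - b‖ ≤ r :=
    ae_of_mem_couplings (P := p) (Q := q) ⟨inferInstance, by simp, by simp⟩ hp hq
  have hint : ∀ (p' : Measure (Euc d)) [IsProbabilityMeasure p'] (c w : Euc d),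
      (∀ᵐ x ∂p', ‖x - c‖ ≤ r) → Integrable (fun x => ⟪w, x - c⟫) p' := by
    intro p' _ c w hc
    refine Integrable.of_bound (Measurable.aestronglyMeasurable (by fun_prop)) (‖w‖ * r) ?_
    filter_upwards [hc] with x hx
    exact (norm_inner_le_norm _ _).trans (mul_le_mul_of_nonneg_left hx (norm_nonneg _))
  have i1 : Integrable (fun z : Euc d × Euc d => ⟪a - b, z.1 - a⟫) (p.prod q) :=
    (hint p a (a - b) hp).comp_fst q
  have i2 : Integrable (fun z : Euc d × Euc d => ⟪a - b, z.2 - b⟫) (p.prod q) :=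
    (hint q b (a - b) hq).comp_snd p
  have i3 : Integrable (fun z : Euc d × Euc d => ‖a - b‖ ^ 2 + 2 * ⟪a - b, z.1 - a⟫)
      (p.prod q) := (integrable_const _).add (i1.const_mul 2)
  have i4 : Integrable (fun z : Euc d × Euc d => ‖a - b‖ ^ 2 + 2 * ⟪a - b, z.1 - a⟫ -
      2 * ⟪a - b, z.2 - b⟫) (p.prod q) := i3.sub (i2.const_mul 2)
  have hle : ∫ z, ‖z.1 - z.2‖ ^ 2 ∂(p.prod q) ≤
      ∫ z, (‖a - b‖ ^ 2 + 2 * ⟪a - b, z.1 - a⟫ - 2 * ⟪a - b, z.2 - b⟫ + 4 * r ^ 2)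
        ∂(p.prod q) := by
    refine integral_mono_of_nonneg (ae_of_all _ fun z => sq_nonneg _)
      (i4.add (integrable_const _)) ?_
    filter_upwards [hae] with z hz
    have hexp : z.1 - z.2 = (a - b) + ((z.1 - a) - (z.2 - b)) := by abel
    have huv : ‖(z.1 - a) - (z.2 - b)‖ ^ 2 ≤ 4 * r ^ 2 := by
      have h1 : ‖(z.1 - a) - (z.2 - b)‖ ≤ 2 * r := by
        refine (norm_sub_le _ _).trans ?_
        linarith [hz.1, hz.2]
      calc _ ≤ (2 * r) ^ 2 := by gcongr
        _ = 4 * r ^ 2 := by ring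
    rw [hexp, norm_add_sq_real, inner_sub_right]
    linarith
  rw [integral_add i4 (integrable_const _), integral_sub i3 (i2.const_mul 2),
    integral_add (integrable_const _) (i1.const_mul 2), integral_const_mul, integral_const_mul,
    integral_const, integral_const, integral_fun_fst (fun x => ⟪a - b, x - a⟫),
    integral_fun_snd (fun y => ⟪a - b, y - b⟫)] at hle
  simp only [probReal_univ, one_smul] at hle
  have h1 := (abs_le.1 (hpm (a - b))).2
  have h2 := (abs_le.1 (hqm (a - b))).1
  linarith

/-- Gluing conditional distributions onto a coupling of pushforwards. -/
lemma parallelComp_condDistrib_mem_couplings [IsProbabilityMeasure P] [IsProbabilityMeasure Q]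
    {φ : Euc d → Euc d} (hφ : Measurable φ) {γ : Measure (Euc d × Euc d)}
    (hγ : γ ∈ Couplings (P.map φ) (Q.map φ)) :
    (condDistrib id φ P ∥ₖ condDistrib id φ Q) ∘ₘ γ ∈ Couplings P Q := by
  have hprob := hγ.1
  have hP : condDistrib id φ P ∘ₘ (P.map φ) = P := by
    rw [condDistrib_comp_map hφ.aemeasurable aemeasurable_id, Measure.map_id]
  have hQ : condDistrib id φ Q ∘ₘ (Q.map φ) = Q := by
    rw [condDistrib_comp_map hφ.aemeasurable aemeasurable_id, Measure.map_id]
  refine ⟨inferInstance, ?_, ?_⟩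
  · conv_rhs => rw [← hP, ← hγ.2.1]
    ext s hs
    rw [Measure.map_apply measurable_fst hs,
      Measure.bind_apply (measurable_fst hs) (Kernel.aemeasurable _),
      Measure.bind_apply hs (Kernel.aemeasurable _),
      lintegral_map (Kernel.measurable_coe _ hs) measurable_fst]
    refine lintegral_congr fun z => ?_
    rw [← Set.prod_univ, Kernel.parallelComp_apply_prod, measure_univ, mul_one]
  · conv_rhs => rw [← hQ, ← hγ.2.2]
    ext s hs
    rw [Measure.map_apply measurable_snd hs,
      Measure.bind_apply (measurable_snd hs) (Kernel.aemeasurable _),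
      Measure.bind_apply hs (Kernel.aemeasurable _),
      lintegral_map (Kernel.measurable_coe _ hs) measurable_snd]
    refine lintegral_congr fun z => ?_
    rw [← Set.univ_prod, Kernel.parallelComp_apply_prod, measure_univ, one_mul]

lemma ae_condDistrib_gridSnap [IsProbabilityMeasure P] (hα : 0 < α) (hC : 0 < C)
    (hf : IsHolderDensity d α C P f) {L : ℕ} (hL : 0 < L) :
    ∀ᵐ a ∂(P.map (gridSnap d (1 / L))),
      (∃ x ∈ unitCube d, ‖x - a‖ ≤ √d * (1 / L)) ∧
      (∀ᵐ x ∂(condDistrib id (gridSnap d (1 / L)) P a), ‖x - a‖ ≤ √d * (1 / L)) ∧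
      ∀ w, |∫ x, ⟪w, x - a⟫ ∂(condDistrib id (gridSnap d (1 / L)) P a)| ≤
        ‖w‖ * (C ^ 2 * (√d * (1 / L)) * (√d * (1 / L)) ^ α) := by
  have hG := measurable_gridSnap (d := d) (1 / L)
  have hh : (0 : ℝ) < 1 / L := one_div_pos.2 (Nat.cast_pos.2 hL)
  filter_upwards [ae_map_singleton_ne_zero (μ := P) hG (countable_range_gridSnap _)] with a ha
  rw [condDistrib_id_eq_cond hG ha]
  rw [Measure.map_apply hG (measurableSet_singleton a)] at ha
  have hdist : ∀ x ∈ gridSnap d (1 / L) ⁻¹' {a}, ‖x - a‖ ≤ √d * (1 / L) := by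
    rintro x rfl
    exact norm_sub_gridSnap_le hh x
  refine ⟨?_, ae_cond_of_forall_mem (hG (measurableSet_singleton a)) hdist,
    abs_integral_inner_cond_le hα hC hf hL ha⟩
  by_contra! hcon
  refine ha (measure_eq_zero_iff_ae_notMem.2 ?_)
  filter_upwards [hf.ae_mem_unitCube] with x hx hxa using (hcon x hx).not_ge (hdist x hxa)

/-- Undoing the discretization increases the squared Wasserstein distance by `O(h^{1+α})`. -/
theorem W2sq_le_map_gridSnap [IsProbabilityMeasure P] [IsProbabilityMeasure Q] (hα : 0 < α)
    (hα1 : α < 1) (hC : 0 < C) (hf : IsHolderDensity d α C P f) (hg : IsHolderDensity d α C Q g)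
    {L : ℕ} (hL : 0 < L) :
    W2sq P Q ≤ W2sq (P.map (gridSnap d (1 / L))) (Q.map (gridSnap d (1 / L))) +
      (12 * d * C ^ 2 * √d ^ α + 4 * d) * (1 / L : ℝ) ^ (1 + α) := by
  have hL0 : (0 : ℝ) < L := Nat.cast_pos.2 hL
  have hL1 : (1 : ℝ) ≤ L := Nat.one_le_cast.2 hL
  have hh : (0 : ℝ) < 1 / L := by positivity
  have hh1 : (1 / L : ℝ) ≤ 1 := (div_le_one hL0).2 hL1
  have hG := measurable_gridSnap (d := d) (1 / L)
  have hPa := ae_condDistrib_gridSnap hα hC hf hL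
  have hQa := ae_condDistrib_gridSnap hα hC hg hL
  have := Measure.isProbabilityMeasure_map (μ := P) hG.aemeasurable
  have := Measure.isProbabilityMeasure_map (μ := Q) hG.aemeasurable
  rw [← sub_le_iff_le_add]
  refine le_W2sq fun γ hγ => ?_
  have hprob := hγ.1
  set h : ℝ := 1 / L with hhdef
  have hglue := parallelComp_condDistrib_mem_couplings hG hγ
  set κ := condDistrib id (gridSnap d h) P ∥ₖ condDistrib id (gridSnap d h) Q with hκ
  have hprob' := hglue.1
  have hint : Integrable (fun p : Euc d × Euc d => ‖p.1 - p.2‖ ^ 2) (κ ∘ₘ γ) := by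
    refine Integrable.of_bound (by fun_prop) (√d ^ 2) ?_
    filter_upwards [ae_of_mem_couplings hglue hf.ae_mem_unitCube hg.ae_mem_unitCube] with p hp
    rw [norm_pow, norm_norm]
    gcongr
    exact norm_sub_le_of_mem_unitCube hp.1 hp.2
  have hle := W2sq_le_of_mem hglue
  rw [Measure.comp_eq_comp_const_apply] at hint hle
  rw [Kernel.integral_comp hint, Kernel.const_apply] at hle
  have hdsq : √(d : ℝ) * √d = d := Real.mul_self_sqrt (Nat.cast_nonneg d)
  have hbound : ∀ᵐ p ∂γ, ‖p.1 - p.2‖ ≤ 3 * √d ∧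
      ∫ z, ‖z.1 - z.2‖ ^ 2 ∂(κ p) ≤
        ‖p.1 - p.2‖ ^ 2 + (12 * d * C ^ 2 * √d ^ α + 4 * d) * h ^ (1 + α) := by
    filter_upwards [ae_of_mem_couplings hγ hPa hQa] with p hp
    obtain ⟨⟨⟨x, hx, hxa⟩, hp2, hp3⟩, ⟨y, hy, hyb⟩, hq2, hq3⟩ := hp
    have hsd : √(d : ℝ) * h ≤ √d := mul_le_of_le_one_right (by positivity) hh1
    have hab : ‖p.1 - p.2‖ ≤ 3 * √d := by
      have h1 : p.1 - p.2 = (x - y) - (x - p.1) + (y - p.2) := by abel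
      have h2 := norm_add_le ((x - y) - (x - p.1)) (y - p.2)
      have h3 := norm_sub_le (x - y) (x - p.1)
      have h4 := norm_sub_le_of_mem_unitCube hx hy
      rw [h1]
      linarith
    refine ⟨hab, ?_⟩
    rw [hκ, Kernel.parallelComp_apply]
    refine (integral_prod_norm_sub_sq_le hp2 hq2 hp3 hq3).trans ?_
    have hpow : h * h ^ α = h ^ (1 + α) := by rw [Real.rpow_add hh, Real.rpow_one]
    have hmain : 4 * ‖p.1 - p.2‖ * (C ^ 2 * (√d * h) * (√d * h) ^ α) ≤
        12 * d * C ^ 2 * √d ^ α * h ^ (1 + α) := by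
      calc 4 * ‖p.1 - p.2‖ * (C ^ 2 * (√d * h) * (√d * h) ^ α)
          ≤ 4 * (3 * √d) * (C ^ 2 * (√d * h) * (√d * h) ^ α) := by gcongr
        _ = 12 * (√d * √d) * C ^ 2 * √d ^ α * (h * h ^ α) := by
            rw [Real.mul_rpow (by positivity) hh.le]; ring
        _ = _ := by rw [hdsq, hpow]
    have hsq : 4 * (√d * h) ^ 2 ≤ 4 * d * h ^ (1 + α) := by
      calc 4 * (√d * h) ^ 2 = 4 * (√d * √d) * h ^ 2 := by ring
        _ = 4 * d * h ^ 2 := by rw [hdsq]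
        _ ≤ _ := by gcongr; exact sq_le_rpow_one_add hh hh1 hα1
    linarith
  have hint' : Integrable (fun p : Euc d × Euc d => ‖p.1 - p.2‖ ^ 2) γ := by
    refine Integrable.of_bound (by fun_prop) ((3 * √d) ^ 2) ?_
    filter_upwards [hbound] with p hp
    rw [norm_pow, norm_norm]
    gcongr
    exact hp.1
  have hmono := integral_mono_of_nonneg
    (ae_of_all _ fun p => integral_nonneg fun z : Euc d × Euc d => sq_nonneg ‖z.1 - z.2‖)
    (hint'.add (integrable_const _)) (hbound.mono fun p hp => hp.2)
  simp only [Pi.add_apply] at hmono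
  rw [integral_add hint' (integrable_const _), integral_const, probReal_univ, one_smul] at hmono
  linarith

end LowerBound

/-- For `(α,C)`-controlled probability measures `P, Q` on `(0,1)^d`,
there is a constant `K > 0` depending only on `d, C, α` such that for every grid
width `h = 1/L`, `|W₂²(G_h#P, G_h#Q) − W₂²(P,Q)| ≤ K h^{1+α}`. -/
theorem grid_discretization_error (d : ℕ) (hd : 1 ≤ d) (α C : ℝ)
    (hα0 : 0 < α) (hα1 : α < 1) (hC : 1 < C) :
    ∃ K > (0 : ℝ), ∀ P Q : Measure (Euc d),
      IsProbabilityMeasure P → IsProbabilityMeasure Q →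
      IsControlled d α C P Q →
      ∀ h : ℝ, 0 < h → (∃ L : ℕ, 0 < L ∧ h = 1 / L) →
        |W2sq (P.map (gridSnap d h)) (Q.map (gridSnap d h)) - W2sq P Q|
          ≤ K * h ^ (1 + α) := by
  have hC0 : 0 < C := zero_lt_one.trans hC
  have hR := refineConst_nonneg (d := d) (α := α) hC0
  refine ⟨(8 * d + 5 + 8 * refineConst d α C) + (12 * d * C ^ 2 * √d ^ α + 4 * d),
    by positivity, ?_⟩
  rintro P Q _ _ ⟨μ, ν, hP, hQ, ⟨Cμ, Cν, hCμ, hCν, hsum, hμ, hν⟩, hbμ, hbν⟩ _ hh ⟨L, hL, rfl⟩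
  obtain ⟨f, hf⟩ := exists_isHolderDensity hα0 (by linarith) hP hμ hbμ
  obtain ⟨g, hg⟩ := exists_isHolderDensity hα0 (by linarith) hQ hν hbν
  have hupper := W2sq_map_gridSnap_le hα0 hα1 hC0 hf hg hL
  have hlower := W2sq_le_map_gridSnap hα0 hα1 hC0 hf hg hL
  have h1 : 0 ≤ (8 * d + 5 + 8 * refineConst d α C) * (1 / L : ℝ) ^ (1 + α) := by positivity
  have h2 : 0 ≤ (12 * d * C ^ 2 * √d ^ α + 4 * d) * (1 / L : ℝ) ^ (1 + α) := by positivity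
  rw [add_mul, abs_sub_le_iff]
  constructor <;> linarith
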